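/- With Z^{(q)}(x;θ) := e^{θx}(1 + (q−ψ(θ)) ∫_0^x e^{−θz} W^{(q)}(z) dz), the following convolution identity holds for all a ≤ b and all θ for which ψ(θ) is defined: λ ∫_a^b Z^{(q)}(y−a;θ) W^{(q+λ)}(b−y) dy = Z^{(q+λ)}(b−a;θ) − Z^{(q)}(b−a;θ). -/

import Mathlib

/-! The identity is proved by comparing Laplace transforms in `x = b - a`. Write `L`, `Ll` for the
transforms of `W`, `Wl` and `c = q - ψ θ`. On `[0, ∞)` the function `Zfun ψ q W θ` is
`E + c • (W ⋆ E)` with `E x = exp (θ x)`, so its transform at `s > θ` is `(1 + c L(s)) / (s - θ)`.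
Since `L = 1 / (ψ - q)` and `Ll = 1 / (ψ - q - lam)`, one has `Ll - L = lam L Ll`, whence
`lam (1 + c L) Ll / (s - θ) = ((1 + (c + lam) Ll) - (1 + c L)) / (s - θ)`: both sides of the claim
have the same transform (`HasLaplace.conv` and `core_identity`).

The resolvent relation `Ll - L = lam L Ll` (`eventually_resolvent`) is only claimed for large `s`:
as `L` and `Ll` tend to `0`, neither `ψ s - q` nor `ψ s - (q + lam)` can vanish there, since by the
convention `1 / 0 = 0` the other transform would then be `±1 / lam`.

Uniqueness of the Laplace transform (`eq_zero_of_hasLaplace_zero`) is reduced to characteristic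
functions: the positive and negative parts of `exp (-s₀ z) f z` are densities of two finite measures
whose moment-generating functions agree on `(-∞, 1)`, hence by analytic continuation on the half
plane `re < 1`, in particular on the imaginary axis. -/

open MeasureTheory

/-- `Z^{(q)}(x;θ) = e^{θx}(1 + (q − ψ(θ)) ∫_0^x e^{−θz} W(z) dz)`. -/
noncomputable def Zfun (ψ : ℝ → ℝ) (q : ℝ) (W : ℝ → ℝ) (θ x : ℝ) : ℝ :=
  Real.exp (θ * x) * (1 + (q - ψ θ) * ∫ z in (0 : ℝ)..x, Real.exp (-θ * z) * W z)

namespace ScaleFun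

open Set Filter Topology ProbabilityTheory

/-! ### Laplace transforms and one-sided convolution -/

/-- `A` is the (absolutely convergent) Laplace transform of `f|_{(0,∞)}` at `s`. -/
def HasLaplace (f : ℝ → ℝ) (s A : ℝ) : Prop :=
  IntegrableOn (fun z => Real.exp (-s * z) * f z) (Ioi 0) ∧
    ∫ z in Ioi (0 : ℝ), Real.exp (-s * z) * f z = A

/-- One-sided convolution `∫_0^x f(t) g(x - t) dt`. -/
noncomputable def conv (f g : ℝ → ℝ) (x : ℝ) : ℝ := ∫ t in (0 : ℝ)..x, f t * g (x - t)

lemma HasLaplace.add {f g : ℝ → ℝ} {s A B : ℝ} (hf : HasLaplace f s A) (hg : HasLaplace g s B) :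
    HasLaplace (fun x => f x + g x) s (A + B) := by
  have e : (fun z => Real.exp (-s * z) * (f z + g z)) =
      fun z => Real.exp (-s * z) * f z + Real.exp (-s * z) * g z := by
    funext z; ring
  unfold HasLaplace
  rw [e]
  exact ⟨hf.1.add hg.1, by rw [integral_add hf.1 hg.1, hf.2, hg.2]⟩

lemma HasLaplace.const_mul {f : ℝ → ℝ} {s A : ℝ} (k : ℝ) (hf : HasLaplace f s A) :
    HasLaplace (fun x => k * f x) s (k * A) := by
  have e : (fun z => Real.exp (-s * z) * (k * f z)) =
      fun z => k * (Real.exp (-s * z) * f z) := by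
    funext z; ring
  unfold HasLaplace
  rw [e]
  exact ⟨hf.1.const_mul k, by rw [integral_const_mul, hf.2]⟩

lemma hasLaplace_exp {θ s : ℝ} (h : θ < s) :
    HasLaplace (fun x => Real.exp (θ * x)) s (1 / (s - θ)) := by
  have e : (fun z => Real.exp (-s * z) * Real.exp (θ * z)) =
      fun z => Real.exp ((θ - s) * z) := by
    funext z; rw [← Real.exp_add]; ring_nf
  have hn : θ - s < 0 := by linarith
  unfold HasLaplace
  rw [e]
  refine ⟨integrableOn_exp_mul_Ioi hn 0, ?_⟩
  rw [integral_exp_mul_Ioi hn 0, mul_zero, Real.exp_zero, ← neg_sub s θ, neg_div_neg_eq]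

/-- The Laplace transform turns convolution into multiplication, because `exp (-s ·)` is
multiplicative: `exp (-s x) = exp (-s t) exp (-s (x - t))`. -/
lemma HasLaplace.conv {f g : ℝ → ℝ} {s A B : ℝ} (hf : HasLaplace f s A) (hg : HasLaplace g s B) :
    HasLaplace (conv f g) s (A * B) := by
  have e : ∀ x, Real.exp (-s * x) * ScaleFun.conv f g x =
      ∫ t in (0 : ℝ)..x, (ContinuousLinearMap.mul ℝ ℝ) (Real.exp (-s * t) * f t)
        (Real.exp (-s * (x - t)) * g (x - t)) := by
    intro x
    rw [ScaleFun.conv, ← intervalIntegral.integral_const_mul]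
    congr 1
    funext t
    have : Real.exp (-s * x) = Real.exp (-s * t) * Real.exp (-s * (x - t)) := by
      rw [← Real.exp_add]; ring_nf
    rw [this, ContinuousLinearMap.mul_apply']
    ring
  constructor
  · have := (integrable_posConvolution hf.1 hg.1 (ContinuousLinearMap.mul ℝ ℝ)).integrableOn
      (s := Ioi 0)
    refine this.congr_fun (fun x hx => ?_) measurableSet_Ioi
    simp only [posConvolution, indicator_of_mem hx]
    exact (e x).symm
  · simp_rw [e]
    rw [integral_posConvolution hf.1 hg.1, hf.2, hg.2]
    rfl

lemma continuous_conv {f g : ℝ → ℝ} (hf : Continuous f) (hg : Continuous g) :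
    Continuous (conv f g) :=
  intervalIntegral.continuous_parametric_intervalIntegral_of_continuous
    (f := fun x t => f t * g (x - t)) (by fun_prop) continuous_id

/-! ### Uniqueness of the Laplace transform -/

/-- Two finite measures whose moment-generating functions exist and agree on `(-∞, 1)` coincide. -/
lemma measure_ext_of_mgf_eqOn {μ ν : Measure ℝ} [IsFiniteMeasure μ] [IsFiniteMeasure ν]
    (hμ : ∀ t < (1 : ℝ), t ∈ integrableExpSet id μ) (hν : ∀ t < (1 : ℝ), t ∈ integrableExpSet id ν)
    (h : ∀ t < (1 : ℝ), mgf id μ t = mgf id ν t) : μ = ν := by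
  have hsub : ∀ {ρ : Measure ℝ}, (∀ t < (1 : ℝ), t ∈ integrableExpSet id ρ) →
      AnalyticOnNhd ℂ (complexMGF id ρ) {z | z.re ∈ Iio (1 : ℝ)} := fun hρ =>
    analyticOnNhd_complexMGF.mono fun z hz => interior_maximal (fun t ht => hρ t ht) isOpen_Iio hz
  have hfreq : ∃ᶠ z in 𝓝[≠] ((0 : ℝ) : ℂ), complexMGF id μ z = complexMGF id ν z := by
    have h_real : ∃ᶠ (x : ℝ) in 𝓝[≠] 0, complexMGF id μ x = complexMGF id ν x := by
      refine Eventually.frequently ?_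
      filter_upwards [mem_nhdsWithin_of_mem_nhds (Iio_mem_nhds (zero_lt_one' ℝ))] with x hx
      rw [complexMGF_ofReal, complexMGF_ofReal, h x hx]
    have hmap : Tendsto (fun x : ℝ => (x : ℂ)) (𝓝[≠] 0) (𝓝[≠] ((0 : ℝ) : ℂ)) :=
      tendsto_nhdsWithin_of_tendsto_nhds_of_eventually_within _
        (Complex.continuous_ofReal.continuousAt.tendsto.mono_left nhdsWithin_le_nhds)
        (by filter_upwards [self_mem_nhdsWithin] with x hx; simpa using hx)
    exact hmap.frequently h_real
  have heq := AnalyticOnNhd.eqOn_of_preconnected_of_frequently_eq (hsub hμ) (hsub hν)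
    ((convex_Iio (1 : ℝ)).linear_preimage Complex.reLm).isPreconnected
    (z₀ := ((0 : ℝ) : ℂ)) (by simp) hfreq
  refine Measure.ext_of_charFun ?_
  funext t
  rw [← complexMGF_id_mul_I, ← complexMGF_id_mul_I]
  exact heq (by simp)

/-- Uniqueness of the Laplace transform for continuous functions, in homogeneous form. -/
lemma eq_zero_of_hasLaplace_zero {f : ℝ → ℝ} (hf : Continuous f) {c : ℝ}
    (h : ∀ s > c, HasLaplace f s 0) : ∀ x ≥ 0, f x = 0 := by
  set g : ℝ → ℝ := fun z => Real.exp (-(c + 1) * z) * f z with hg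
  have hgc : Continuous g := by fun_prop
  have hgi : IntegrableOn g (Ioi 0) := (h (c + 1) (by linarith)).1
  have hexp : ∀ t z, Real.exp (t * z) * g z = Real.exp (-(c + 1 - t) * z) * f z := by
    intro t z
    rw [hg, ← mul_assoc, ← Real.exp_add]; ring_nf
  have hgt : ∀ t < (1 : ℝ), IntegrableOn (fun z => Real.exp (t * z) * g z) (Ioi 0) := fun t ht => by
    simp_rw [hexp]; exact (h (c + 1 - t) (by linarith)).1
  have hmp : Measurable fun z => ENNReal.ofReal (g z) := by fun_prop
  have hmn : Measurable fun z => ENNReal.ofReal (-g z) := by fun_prop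
  set μ := (volume.restrict (Ioi (0 : ℝ))).withDensity fun z => ENNReal.ofReal (g z) with hμ
  set ν := (volume.restrict (Ioi (0 : ℝ))).withDensity fun z => ENNReal.ofReal (-g z) with hν
  have : IsFiniteMeasure μ := isFiniteMeasure_withDensity_ofReal hgi.2
  have : IsFiniteMeasure ν := isFiniteMeasure_withDensity_ofReal hgi.neg.2
  -- The two densities are dominated by `|g|`, so their exponential moments are finite too.
  have hip : ∀ t < (1 : ℝ), IntegrableOn
      (fun z => (ENNReal.ofReal (g z)).toReal * Real.exp (t * z)) (Ioi 0) := fun t ht => by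
    refine Integrable.mono (hgt t ht) (by fun_prop) (ae_of_all _ fun z => ?_)
    simp only [norm_mul, Real.norm_eq_abs, ENNReal.toReal_ofReal', Real.abs_exp]
    rw [mul_comm]
    refine mul_le_mul_of_nonneg_left ?_ (Real.exp_nonneg _)
    rw [abs_of_nonneg (le_max_right _ _)]
    exact max_le (le_abs_self _) (abs_nonneg _)
  have hin : ∀ t < (1 : ℝ), IntegrableOn
      (fun z => (ENNReal.ofReal (-g z)).toReal * Real.exp (t * z)) (Ioi 0) := fun t ht => by
    refine Integrable.mono (hgt t ht) (by fun_prop) (ae_of_all _ fun z => ?_)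
    simp only [norm_mul, Real.norm_eq_abs, ENNReal.toReal_ofReal', Real.abs_exp]
    rw [mul_comm]
    refine mul_le_mul_of_nonneg_left ?_ (Real.exp_nonneg _)
    rw [abs_of_nonneg (le_max_right _ _)]
    exact max_le (neg_le_abs _) (abs_nonneg _)
  have hμν : μ = ν := by
    refine measure_ext_of_mgf_eqOn (fun t ht => ?_) (fun t ht => ?_) fun t ht => ?_
    · refine (integrable_withDensity_iff_integrable_smul' hmp (ae_of_all _ fun z => by simp)).2 ?_
      exact hip t ht
    · refine (integrable_withDensity_iff_integrable_smul' hmn (ae_of_all _ fun z => by simp)).2 ?_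
      exact hin t ht
    · simp only [mgf, id]
      rw [hμ, hν, integral_withDensity_eq_integral_toReal_smul hmp (ae_of_all _ fun z => by simp),
        integral_withDensity_eq_integral_toReal_smul hmn (ae_of_all _ fun z => by simp)]
      simp only [smul_eq_mul]
      rw [← sub_eq_zero, ← integral_sub (hip t ht) (hin t ht)]
      refine Eq.trans ?_ (h (c + 1 - t) (by linarith)).2
      congr 1
      funext z
      rw [← hexp, ← sub_mul, ENNReal.toReal_ofReal', ENNReal.toReal_ofReal', mul_comm]
      congr 1
      rcases le_total 0 (g z) with hz | hz
      · rw [max_eq_left hz, max_eq_right (by linarith), sub_zero]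
      · rw [max_eq_right hz, max_eq_left (by linarith)]; ring
  have hae : (fun z => ENNReal.ofReal (g z)) =ᵐ[volume.restrict (Ioi (0 : ℝ))]
      fun z => ENNReal.ofReal (-g z) :=
    (withDensity_eq_iff_of_sigmaFinite hmp.aemeasurable hmn.aemeasurable).1 hμν
  have hfz : f =ᵐ[volume.restrict (Ioi (0 : ℝ))] fun _ => 0 := by
    filter_upwards [hae] with z hz
    have hg0 : g z = 0 := by
      have hz' := congrArg ENNReal.toReal hz
      rw [ENNReal.toReal_ofReal', ENNReal.toReal_ofReal'] at hz'
      rcases le_total 0 (g z) with h0 | h0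
      · rw [max_eq_left h0, max_eq_right (by linarith)] at hz'; exact hz'
      · rw [max_eq_right h0, max_eq_left (by linarith)] at hz'; linarith
    exact (mul_eq_zero.1 hg0).resolve_left (Real.exp_ne_zero _)
  have hEq : EqOn f (fun _ => 0) (Ioi 0) :=
    Measure.eqOn_open_of_ae_eq hfz isOpen_Ioi hf.continuousOn continuousOn_const
  have hcl := hEq.closure hf continuous_const
  rw [closure_Ioi] at hcl
  exact fun x hx => hcl hx

/-! ### The convolution identity -/

/-- Laplace transforms vanish at infinity. -/
lemma tendsto_laplace {f : ℝ → ℝ} {s₀ : ℝ} {L : ℝ → ℝ} (h : ∀ s > s₀, HasLaplace f s (L s)) :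
    Tendsto L atTop (𝓝 0) := by
  have hi := (h (s₀ + 1) (by linarith)).1
  have key : Tendsto (fun s => ∫ z in Ioi (0 : ℝ), Real.exp (-s * z) * f z) atTop
      (𝓝 (∫ _ in Ioi (0 : ℝ), (0 : ℝ))) := by
    refine tendsto_integral_filter_of_dominated_convergence
      (fun z => ‖Real.exp (-(s₀ + 1) * z) * f z‖) ?_ ?_ hi.norm ?_
    · filter_upwards [eventually_gt_atTop s₀] with s hs using (h s hs).1.1
    · filter_upwards [eventually_ge_atTop (s₀ + 1)] with s hs
      filter_upwards [ae_restrict_mem measurableSet_Ioi] with z hz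
      rw [norm_mul, norm_mul, Real.norm_eq_abs, Real.abs_exp, Real.norm_eq_abs (Real.exp _),
        Real.abs_exp]
      have hz' : (0 : ℝ) < z := hz
      gcongr
    · filter_upwards [ae_restrict_mem measurableSet_Ioi] with z hz
      have hz' : (0 : ℝ) < z := hz
      have h1 : Tendsto (fun s : ℝ => Real.exp (-s * z)) atTop (𝓝 0) :=
        Real.tendsto_exp_atBot.comp (tendsto_neg_atTop_atBot.atBot_mul_const hz')
      simpa using h1.mul_const (f z)
  rw [integral_zero] at key
  refine key.congr' ?_
  filter_upwards [eventually_gt_atTop s₀] with s hs using (h s hs).2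

/-- The resolvent relation between the transforms of `W` and `V`, for large arguments. -/
lemma eventually_resolvent {ψ W V : ℝ → ℝ} {q lam c d : ℝ} (hlam : 0 < lam)
    (hW : ∀ s > c, HasLaplace W s (1 / (ψ s - q)))
    (hV : ∀ s > d, HasLaplace V s (1 / (ψ s - (q + lam)))) :
    ∀ᶠ s in atTop, 1 / (ψ s - (q + lam)) - 1 / (ψ s - q) =
      lam * (1 / (ψ s - q) * (1 / (ψ s - (q + lam)))) := by
  have hpos : 0 < 1 / lam := by positivity
  filter_upwards [(tendsto_laplace hW).eventually_ne hpos.ne,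
    (tendsto_laplace hV).eventually_ne (neg_neg_of_pos hpos).ne'] with s h1 h2
  have hne1 : ψ s - q ≠ 0 := fun h0 => h2 (by
    rw [show ψ s - (q + lam) = -lam by linarith, div_neg])
  have hne2 : ψ s - (q + lam) ≠ 0 := fun h0 => h1 (by
    rw [show ψ s - q = lam by linarith])
  field_simp
  ring

/-- The convolution identity for globally continuous representatives of the scale functions. -/
lemma core_identity {ψ W V : ℝ → ℝ} {q lam c d : ℝ} (hlam : 0 < lam)
    (hWc : Continuous W) (hVc : Continuous V)
    (hW : ∀ s > c, HasLaplace W s (1 / (ψ s - q)))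
    (hV : ∀ s > d, HasLaplace V s (1 / (ψ s - (q + lam)))) (θ x : ℝ) (hx : 0 ≤ x) :
    lam * conv (Zfun ψ q W θ) V x = Zfun ψ (q + lam) V θ x - Zfun ψ q W θ x := by
  set E : ℝ → ℝ := fun x => Real.exp (θ * x) with hE
  have hEc : Continuous E := by fun_prop
  have hZ : ∀ (p : ℝ) (U : ℝ → ℝ), Zfun ψ p U θ = fun x => E x + (p - ψ θ) * conv U E x := by
    intro p U
    funext x
    have : conv U E x = Real.exp (θ * x) * ∫ z in (0 : ℝ)..x, Real.exp (-θ * z) * U z := by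
      rw [conv, ← intervalIntegral.integral_const_mul]
      congr 1
      funext t
      rw [← mul_assoc, ← Real.exp_add, hE, mul_comm]
      ring_nf
    rw [this, Zfun]
    ring
  obtain ⟨M, hM⟩ := eventually_atTop.1 (eventually_resolvent hlam hW hV)
  have hZc : ∀ (p : ℝ) {U : ℝ → ℝ}, Continuous U → Continuous (Zfun ψ p U θ) := by
    intro p U hU
    have := continuous_conv hU hEc
    rw [hZ]
    fun_prop
  have hcc := continuous_conv (hZc q hWc) hVc
  have hz1 := hZc q hWc
  have hz2 := hZc (q + lam) hVc
  have key := eq_zero_of_hasLaplace_zero (c := max (max c d) (max M θ))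
    (f := fun x => lam * conv (Zfun ψ q W θ) V x +
      (-1 * Zfun ψ (q + lam) V θ x + Zfun ψ q W θ x)) (by fun_prop) ?_ x hx
  · linarith
  intro s hs
  have hsc : c < s := lt_of_le_of_lt (by simp) hs
  have hsd : d < s := lt_of_le_of_lt (by simp) hs
  have hsM : M < s := lt_of_le_of_lt (by simp) hs
  have hsθ : θ < s := lt_of_le_of_lt (by simp) hs
  have hEl : HasLaplace E s (1 / (s - θ)) := hasLaplace_exp hsθ
  have hZ1 : HasLaplace (Zfun ψ q W θ) s
      (1 / (s - θ) + (q - ψ θ) * (1 / (ψ s - q) * (1 / (s - θ)))) := by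
    rw [hZ]; exact hEl.add (((hW s hsc).conv hEl).const_mul _)
  have hZ2 : HasLaplace (Zfun ψ (q + lam) V θ) s
      (1 / (s - θ) + (q + lam - ψ θ) * (1 / (ψ s - (q + lam)) * (1 / (s - θ)))) := by
    rw [hZ]; exact hEl.add (((hV s hsd).conv hEl).const_mul _)
  have hres := hM s hsM.le
  convert ((hZ1.conv (hV s hsd)).const_mul lam).add ((hZ2.const_mul (-1)).add hZ1) using 1
  linear_combination ((q - ψ θ) * (1 / (s - θ))) * hres

end ScaleFun


/-- With `Z^{(q)}(x;θ)` as above, for the `q`- and `(q+lam)`-scale functions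
`W`, `Wl` of a spectrally negative Lévy process with Laplace exponent `ψ`, the following
convolution identity holds for all `a ≤ b` and all `θ`:
`lam ∫_a^b Z^{(q)}(y−a;θ) Wl(b−y) dy = Z^{(q+lam)}(b−a;θ) − Z^{(q)}(b−a;θ)`. -/
theorem stmt6
    (ψ : ℝ → ℝ) (q lam : ℝ) (hq : 0 ≤ q) (hlam : 0 < lam)
    (Φq Φql : ℝ) (W Wl : ℝ → ℝ)
    (hWneg : ∀ x < (0 : ℝ), W x = 0) (hWlneg : ∀ x < (0 : ℝ), Wl x = 0)
    (hWcont : ContinuousOn W (Set.Ici 0)) (hWlcont : ContinuousOn Wl (Set.Ici 0))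
    (hWmono : MonotoneOn W (Set.Ici 0)) (hWlmono : MonotoneOn Wl (Set.Ici 0))
    (hWlap : ∀ θ : ℝ, Φq < θ →
      IntegrableOn (fun z => Real.exp (-θ * z) * W z) (Set.Ioi 0) ∧
      ∫ z in Set.Ioi (0 : ℝ), Real.exp (-θ * z) * W z = 1 / (ψ θ - q))
    (hWllap : ∀ θ : ℝ, Φql < θ →
      IntegrableOn (fun z => Real.exp (-θ * z) * Wl z) (Set.Ioi 0) ∧
      ∫ z in Set.Ioi (0 : ℝ), Real.exp (-θ * z) * Wl z = 1 / (ψ θ - (q + lam))) :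
    ∀ a b θ : ℝ, a ≤ b →
      lam * ∫ y in a..b, Zfun ψ q W θ (y - a) * Wl (b - y)
        = Zfun ψ (q + lam) Wl θ (b - a) - Zfun ψ q W θ (b - a) := by
  -- Continuous representatives on the whole line, equal to `W` and `Wl` on `[0, ∞)`.
  have hext : ∀ U : ℝ → ℝ, ContinuousOn U (Set.Ici 0) → Continuous fun x => U (max x 0) :=
    fun U hU => hU.comp_continuous (by fun_prop) fun x => le_max_right x 0
  have hlap : ∀ (U : ℝ → ℝ) (s A : ℝ), ScaleFun.HasLaplace U s A →
      ScaleFun.HasLaplace (fun x => U (max x 0)) s A := by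
    intro U s A h
    have e : Set.EqOn (fun z => Real.exp (-s * z) * U z)
        (fun z => Real.exp (-s * z) * U (max z 0)) (Set.Ioi 0) := fun z hz => by
      simp only [max_eq_left (le_of_lt (Set.mem_Ioi.1 hz))]
    exact ⟨h.1.congr_fun e measurableSet_Ioi,
      (setIntegral_congr_fun measurableSet_Ioi e).symm.trans h.2⟩
  have hZ : ∀ (U : ℝ → ℝ) (p θ x : ℝ), 0 ≤ x →
      Zfun ψ p (fun x => U (max x 0)) θ x = Zfun ψ p U θ x := by
    intro U p θ x hx
    unfold Zfun
    congr 3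
    refine intervalIntegral.integral_congr fun z hz => ?_
    rw [Set.uIcc_of_le hx] at hz
    simp only [max_eq_left hz.1]
  intro a b θ hab
  have hx : 0 ≤ b - a := sub_nonneg.2 hab
  have core := ScaleFun.core_identity (ψ := ψ) (q := q) hlam (hext W hWcont) (hext Wl hWlcont)
    (fun s hs => hlap _ _ _ (hWlap s hs)) (fun s hs => hlap _ _ _ (hWllap s hs)) θ (b - a) hx
  rw [hZ _ _ _ _ hx, hZ _ _ _ _ hx] at core
  rw [← core]
  congr 1
  have hsub := intervalIntegral.integral_comp_sub_right (a := a) (b := b)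
    (fun t => Zfun ψ q W θ t * Wl (b - a - t)) a
  simp only [sub_self, sub_sub_sub_cancel_right] at hsub
  rw [hsub, ScaleFun.conv]
  refine intervalIntegral.integral_congr fun t ht => ?_
  rw [Set.uIcc_of_le hx] at ht
  simp only [hZ _ _ _ _ ht.1, max_eq_left (sub_nonneg.2 ht.2)]
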